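/- For all positive integers α, β, m, n, r, the congruence ∑_{k=0}^{n-1} [(k)_β·(k+β+1)_β]^r · [2(k+β)] · q^{(n-2β-k)(2βαm+1)} · ∏_{i=0}^{2β-1} w_{k+i}^{(α)}(x;q)^m ≡ 0 (mod [n]) holds in ℤ[q][x]. -/

import Mathlib

open Polynomial LaurentPolynomial

/-- The Gaussian binomial coefficient as a polynomial in `q` over `ℤ`. -/
noncomputable def qbinom : ℕ → ℕ → Polynomial ℤ
  | _, 0 => 1
  | 0, _ + 1 => 0
  | n + 1, k + 1 => qbinom n k + Polynomial.X ^ (k + 1) * qbinom n (k + 1)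

/-- The `q`-integer `[m] = 1 + q + ⋯ + q^{m-1}` in `ℤ[q]`. -/
noncomputable def qint (m : ℕ) : Polynomial ℤ := ∑ i ∈ Finset.range m, Polynomial.X ^ i

/-- The `q`-integer `[m]` as a Laurent polynomial in `q`. -/
noncomputable def qintL (m : ℕ) : LaurentPolynomial ℤ := (qint m).toLaurent

/-- `qbinom(k-1,j-1)·qbinom(k+j,j) − qbinom(k,j)·qbinom(k+j,j-1)`. -/
noncomputable def qwCoeff (k j : ℕ) : Polynomial ℤ :=
  qbinom (k - 1) (j - 1) * qbinom (k + j) j - qbinom k j * qbinom (k + j) (j - 1)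

/-- `w_k^{(α)}(x;q) = ∑_{j=1}^{k} q^{α(C(j+1,2)−(k+1)(j−1))} ·
(qbinom(k-1,j-1)·qbinom(k+j,j) − qbinom(k,j)·qbinom(k+j,j-1))^α · x^{j-1}`,
a polynomial in `x` with coefficients in `ℤ[q,q⁻¹]` (the exponent of `q` may be negative). -/
noncomputable def qw (α k : ℕ) : Polynomial (LaurentPolynomial ℤ) :=
  ∑ j ∈ Finset.Icc 1 k,
    Polynomial.C (LaurentPolynomial.T ((α : ℤ) * (((j + 1).choose 2 : ℤ) - ((k : ℤ) + 1) * ((j : ℤ) - 1))) *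
        ((qwCoeff k j).toLaurent) ^ α) *
      Polynomial.X ^ (j - 1)

/-!
Since `[n]` is the product of the cyclotomic polynomials `Φ_d` with `1 < d ∣ n`, it suffices that
the sum vanishes when `q` is a primitive `d`-th root of unity `ζ`. Absorption turns
`(1 - q ^ (j + 1))` times the `(j + 1)`-st coefficient of `w_{k + 1}` into
`q ^ (k + 1) * (1 - q)` times a product of two Gaussian binomials. By the `q`-Lucas theorem, this
product at `ζ` depends on the block of length `d` containing `k` only through ordinary binomials,
and inside a block it is symmetric, up to a power of `ζ`, under the reflection that makes
`w_k` and `w_{d - 1 - k}` proportional.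
Accordingly the summands with indices `k` and `d - 2 * β - k` of a block cancel: their rising
factorials agree modulo `d`, and `[2 * (k + β)]` changes sign up to a power of `ζ`. In the
remaining summands some `k + t` with `0 ≤ t ≤ 2 * β` is divisible by `d`, so one of the
`q`-integers vanishes at `ζ`.
-/

section QBinomial

@[simp]
lemma qbinom_zero_right (n : ℕ) : qbinom n 0 = 1 := by
  simp only [qbinom]

lemma qbinom_succ_succ (n k : ℕ) :
    qbinom (n + 1) (k + 1) = qbinom n k + X ^ (k + 1) * qbinom n (k + 1) := by
  simp only [qbinom]

lemma qbinom_eq_zero_of_lt {n k : ℕ} (h : n < k) : qbinom n k = 0 := by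
  induction n generalizing k with
  | zero => cases k with
    | zero => exact absurd h (lt_irrefl 0)
    | succ k => simp only [qbinom]
  | succ n ih => cases k with
    | zero => exact absurd h (Nat.not_lt_zero _)
    | succ k => rw [qbinom_succ_succ, ih (by lia), ih (by lia), mul_zero, add_zero]

lemma qbinom_self (n : ℕ) : qbinom n n = 1 := by
  induction n with
  | zero => exact qbinom_zero_right 0
  | succ n ih => rw [qbinom_succ_succ, ih, qbinom_eq_zero_of_lt n.lt_succ_self, mul_zero, add_zero]

lemma X_pow_mul_one_sub_mul_qbinom_succ_right (n k : ℕ) :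
    X ^ k * (1 - X ^ (k + 1)) * qbinom n (k + 1) = (X ^ k - X ^ n) * qbinom n k := by
  induction n generalizing k with
  | zero =>
    rw [qbinom_eq_zero_of_lt k.succ_pos]
    cases k with
    | zero => ring
    | succ k => rw [qbinom_eq_zero_of_lt k.succ_pos, mul_zero, mul_zero]
  | succ n ih =>
    have ih_k := ih k
    cases k with
    | zero =>
      simp only [qbinom_succ_succ, qbinom_zero_right] at ih_k ⊢
      linear_combination X * ih_k
    | succ k =>
      rw [qbinom_succ_succ n (k + 1), qbinom_succ_succ n k]
      linear_combination X ^ (k + 2) * ih_k + X * ih k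

lemma one_sub_X_pow_mul_qbinom_succ_succ (n k : ℕ) :
    (1 - X ^ (k + 1)) * qbinom (n + 1) (k + 1) = (1 - X ^ (n + 1)) * qbinom n k := by
  rw [qbinom_succ_succ]
  linear_combination X * X_pow_mul_one_sub_mul_qbinom_succ_right n k

/-- The product of Gaussian binomials to which `[j + 1] * qwCoeff (k + 1) (j + 1)` reduces, up to
the factor `q ^ (k + 1)`. -/
noncomputable def qbinomPair (k j : ℕ) : ℤ[X] :=
  qbinom k j * qbinom (k + j + 2) j

lemma X_pow_mul_one_sub_sq_mul_qbinomPair_succ_right (k j : ℕ) :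
    X ^ j * (1 - X ^ (j + 1)) ^ 2 * qbinomPair k (j + 1) =
      (X ^ j - X ^ k) * (1 - X ^ (k + j + 3)) * qbinomPair k j := by
  have h_left := X_pow_mul_one_sub_mul_qbinom_succ_right k j
  have h_right := one_sub_X_pow_mul_qbinom_succ_succ (k + j + 2) j
  rw [qbinomPair, qbinomPair, show k + (j + 1) + 2 = k + j + 2 + 1 by ring]
  linear_combination (1 - X ^ (j + 1)) * qbinom (k + j + 2 + 1) (j + 1) * h_left +
    (X ^ j - X ^ k) * qbinom k j * h_right

lemma one_sub_X_pow_mul_qwCoeff (k j : ℕ) :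
    (1 - X ^ (j + 1)) * qwCoeff (k + 1) (j + 1) = X ^ (k + 1) * (1 - X) * qbinomPair k j := by
  have h_upper := one_sub_X_pow_mul_qbinom_succ_succ k j
  have h_lower := X_pow_mul_one_sub_mul_qbinom_succ_right (k + j + 2) j
  have h_lower' : (1 - X ^ (j + 1)) * qbinom (k + j + 2) (j + 1) =
      (1 - X ^ (k + 2)) * qbinom (k + j + 2) j := by
    refine mul_left_cancel₀ (pow_ne_zero j X_ne_zero) ?_
    linear_combination h_lower
  rw [qwCoeff, qbinomPair, Nat.add_sub_cancel, Nat.add_sub_cancel,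
    show k + 1 + (j + 1) = k + j + 2 by ring]
  linear_combination qbinom k j * h_lower' - qbinom (k + j + 2) j * h_upper

@[simp]
lemma qwCoeff_zero_right (k : ℕ) : qwCoeff k 0 = 0 := by
  simp [qwCoeff]

lemma qwCoeff_eq_zero_of_lt {k j : ℕ} (hk : k ≠ 0) (h : k < j) : qwCoeff k j = 0 := by
  rw [qwCoeff, qbinom_eq_zero_of_lt h, qbinom_eq_zero_of_lt (by lia), zero_mul, zero_mul, sub_zero]

end QBinomial

section RootOfUnity

variable {R : Type*} [CommRing R] [IsDomain R] {ζ : R} {d : ℕ}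

lemma aeval_qbinom_order_eq_zero (hζ : IsPrimitiveRoot ζ d) {k : ℕ} (hk : k ≠ 0) (hkd : k < d) :
    aeval ζ (qbinom d k) = 0 := by
  obtain ⟨k, rfl⟩ := Nat.exists_eq_succ_of_ne_zero hk
  obtain ⟨n, rfl⟩ := Nat.exists_eq_succ_of_ne_zero (Nat.ne_zero_of_lt hkd)
  have h := congrArg (aeval ζ) (one_sub_X_pow_mul_qbinom_succ_succ n k)
  simp only [map_mul, map_sub, map_one, map_pow, aeval_X, hζ.pow_eq_one, sub_self, zero_mul] at h
  exact (mul_eq_zero.1 h).resolve_left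
    (sub_ne_zero.2 (hζ.pow_ne_one_of_pos_of_lt k.succ_ne_zero hkd).symm)

lemma aeval_qbinom_add_order (hζ : IsPrimitiveRoot ζ d) (n : ℕ) {k : ℕ} (hk : k < d) :
    aeval ζ (qbinom (n + d) k) = aeval ζ (qbinom n k) := by
  rcases eq_or_ne k 0 with rfl | hk0
  · simp
  induction n generalizing k with
  | zero =>
    rw [zero_add, aeval_qbinom_order_eq_zero hζ hk0 hk, qbinom_eq_zero_of_lt (by lia), map_zero]
  | succ n ih =>
    obtain ⟨k, rfl⟩ := Nat.exists_eq_succ_of_ne_zero hk0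
    rcases eq_or_ne k 0 with rfl | hk0'
    · simp only [Nat.succ_eq_add_one, add_right_comm n 1 d, qbinom_succ_succ, map_add, map_mul,
        qbinom_zero_right, ih hk hk0]
    · simp only [Nat.succ_eq_add_one, add_right_comm n 1 d, qbinom_succ_succ, map_add, map_mul,
        ih hk hk0, ih (by lia) hk0']

lemma aeval_qbinom_add_order_add_order (hζ : IsPrimitiveRoot ζ d) (hd : d ≠ 0) (n k : ℕ) :
    aeval ζ (qbinom (n + d) (k + d)) = aeval ζ (qbinom n (k + d)) + aeval ζ (qbinom n k) := by
  induction n generalizing k with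
  | zero =>
    rw [zero_add, qbinom_eq_zero_of_lt (show 0 < k + d by lia), map_zero, zero_add]
    rcases eq_or_ne k 0 with rfl | hk
    · rw [zero_add, qbinom_self, qbinom_self]
    · rw [qbinom_eq_zero_of_lt (by lia), qbinom_eq_zero_of_lt (by lia)]
  | succ n ih =>
    cases k with
    | zero =>
      obtain ⟨e, rfl⟩ := Nat.exists_eq_succ_of_ne_zero hd
      have h_below := aeval_qbinom_add_order hζ n e.lt_succ_self
      have h_top := ih 0
      simp only [Nat.succ_eq_add_one, zero_add, qbinom_zero_right, map_one] at h_below h_top ⊢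
      rw [add_right_comm n 1 (e + 1), qbinom_succ_succ, qbinom_succ_succ]
      simp only [map_add, map_mul, map_pow, aeval_X, hζ.pow_eq_one, h_below, h_top]
      ring
    | succ k =>
      rw [add_right_comm n 1 d, add_right_comm k 1 d]
      simp only [qbinom_succ_succ, map_add, map_mul, map_pow, aeval_X]
      rw [ih k, add_right_comm k d 1, ih (k + 1), pow_add ζ (k + 1) d, hζ.pow_eq_one]
      ring

lemma aeval_qbinom_lucas (hζ : IsPrimitiveRoot ζ d) (a e : ℕ) {b f : ℕ} (hb : b < d + f)
    (hf : f < d) :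
    aeval ζ (qbinom (a * d + b) (e * d + f)) = a.choose e * aeval ζ (qbinom b f) := by
  induction a generalizing e with
  | zero => cases e with
    | zero => simp
    | succ e => rw [zero_mul, zero_add, qbinom_eq_zero_of_lt (by lia)]; simp
  | succ a ih =>
    rw [add_one_mul, add_right_comm _ d b]
    cases e with
    | zero =>
      have h := ih 0
      simp only [zero_mul, zero_add, Nat.choose_zero_right] at h ⊢
      rw [aeval_qbinom_add_order hζ _ hf, h]
    | succ e =>
      have h := ih (e + 1)
      rw [add_one_mul, add_right_comm _ d f] at h ⊢
      rw [aeval_qbinom_add_order_add_order hζ (by lia), h, ih, Nat.choose_succ_succ', Nat.cast_add]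
      ring

lemma aeval_qbinomPair_lucas (hζ : IsPrimitiveRoot ζ d) (a e : ℕ) {k j : ℕ} (hk : k + 2 < d)
    (hj : j < d) :
    aeval ζ (qbinomPair (a * d + k) (e * d + j)) =
      a.choose e * (a + e).choose e * aeval ζ (qbinomPair k j) := by
  have h_left := aeval_qbinom_lucas hζ a e (show k < d + j by lia) hj
  have h_right := aeval_qbinom_lucas hζ (a + e) e (show k + j + 2 < d + j by lia) hj
  rw [qbinomPair, show a * d + k + (e * d + j) + 2 = (a + e) * d + (k + j + 2) by ring, map_mul,
    h_left, h_right, qbinomPair, map_mul]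
  ring

lemma aeval_qbinomPair_reflect (hζ : IsPrimitiveRoot ζ d) {k k' j : ℕ} (h : k + k' + 3 = d)
    (hj : j < d) :
    aeval ζ (qbinomPair k j) = ζ ^ ((2 * k + 3) * j) * aeval ζ (qbinomPair k' j) := by
  have h_inv : ζ ^ k * ζ ^ k' * ζ ^ 3 = 1 := by rw [← pow_add, ← pow_add, h, hζ.pow_eq_one]
  induction j with
  | zero => simp [qbinomPair]
  | succ j ih =>
    have h_ratio (l : ℕ) : ζ ^ j * (1 - ζ ^ (j + 1)) ^ 2 * aeval ζ (qbinomPair l (j + 1)) =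
        (ζ ^ j - ζ ^ l) * (1 - ζ ^ (l + j + 3)) * aeval ζ (qbinomPair l j) := by
      simpa using congrArg (aeval ζ) (X_pow_mul_one_sub_sq_mul_qbinomPair_succ_right l j)
    have h_ne : ζ ^ j * (1 - ζ ^ (j + 1)) ^ 2 ≠ 0 :=
      mul_ne_zero (pow_ne_zero _ (hζ.ne_zero (by lia))) (pow_ne_zero _ (sub_ne_zero.2
        (hζ.pow_ne_one_of_pos_of_lt j.succ_ne_zero hj).symm))
    have h_factor : (ζ ^ j - ζ ^ k) * (1 - ζ ^ (k + j + 3)) =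
        ζ ^ (2 * k + 3) * ((ζ ^ j - ζ ^ k') * (1 - ζ ^ (k' + j + 3))) := by
      linear_combination (ζ ^ k * ζ ^ 3 * ζ ^ j * ζ ^ j + ζ ^ k -
        (ζ ^ k * ζ ^ k' * ζ ^ 3 + 1) * ζ ^ j) * h_inv
    refine mul_left_cancel₀ h_ne ?_
    rw [h_ratio, mul_left_comm, h_ratio, ih (by lia), h_factor]
    ring

lemma aeval_qwCoeff_mul_order (hζ : IsPrimitiveRoot ζ d) (a e : ℕ) {k : ℕ} (hk : k + 2 < d) :
    aeval ζ (qwCoeff (a * d + k + 1) (e * d)) = 0 := by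
  cases e with
  | zero => simp
  | succ e =>
    have h_zero (b : ℕ) {l : ℕ} (hl : l + 1 < d) :
        aeval ζ (qbinom (b * d + l) (e * d + (d - 1))) = 0 := by
      rw [aeval_qbinom_lucas hζ _ _ (by lia) (by lia), qbinom_eq_zero_of_lt (by lia), map_zero,
        mul_zero]
    rw [qwCoeff, Nat.add_sub_cancel,
      show a * d + k + 1 + (e + 1) * d = (a + e + 1) * d + (k + 1) by ring,
      show (e + 1) * d - 1 = e * d + (d - 1) by rw [add_one_mul]; lia, map_sub, map_mul, map_mul,
      h_zero a (by lia), h_zero (a + e + 1) (by lia), zero_mul, mul_zero, sub_zero]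

lemma aeval_qwCoeff_reflect (hζ : IsPrimitiveRoot ζ d) (a j : ℕ) {k k' : ℕ}
    (h : k + k' + 3 = d) :
    aeval ζ (qwCoeff (a * d + k + 1) j) =
      ζ ^ ((2 * k + 3) * j) * aeval ζ (qwCoeff (a * d + k' + 1) j) := by
  have h_pow_mul (b c : ℕ) : ζ ^ (b * d + c) = ζ ^ c := by
    rw [pow_add, mul_comm b d, pow_mul, hζ.pow_eq_one, one_pow, one_mul]
  obtain ⟨e, f, hf, rfl⟩ : ∃ e f, f < d ∧ e * d + f = j :=
    ⟨j / d, j % d, Nat.mod_lt j (by lia), Nat.div_add_mod' j d⟩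
  cases f with
  | zero =>
    rw [add_zero, aeval_qwCoeff_mul_order hζ a e (by lia),
      aeval_qwCoeff_mul_order hζ a e (by lia), mul_zero]
  | succ f =>
    have h_pair (l : ℕ) (hl : l + 2 < d) :
        (1 - ζ ^ (f + 1)) * aeval ζ (qwCoeff (a * d + l + 1) (e * d + (f + 1))) =
          ζ ^ (l + 1) * (1 - ζ) * (a.choose e * (a + e).choose e * aeval ζ (qbinomPair l f)) := by
      have h_eval := congrArg (aeval ζ) (one_sub_X_pow_mul_qwCoeff (a * d + l) (e * d + f))
      simp only [map_mul, map_sub, map_one, map_pow, aeval_X, add_assoc, h_pow_mul] at h_eval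
      rw [add_assoc, h_eval, aeval_qbinomPair_lucas hζ a e hl (by lia)]
    have h_ne : 1 - ζ ^ (f + 1) ≠ 0 :=
      sub_ne_zero.2 (hζ.pow_ne_one_of_pos_of_lt f.succ_ne_zero hf).symm
    have h_shift : ζ ^ (k + 1) = ζ ^ (2 * k + 3) * ζ ^ (k' + 1) := by
      rw [← pow_add, show 2 * k + 3 + (k' + 1) = 1 * d + (k + 1) by lia, h_pow_mul]
    have h_exp : ζ ^ ((2 * k + 3) * (e * d + (f + 1))) = ζ ^ ((2 * k + 3) * (f + 1)) := by
      rw [mul_add, ← mul_assoc, h_pow_mul]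
    refine mul_left_cancel₀ h_ne ?_
    rw [mul_left_comm, h_pair k (by lia), h_pair k' (by lia),
      aeval_qbinomPair_reflect hζ h (by lia), h_exp, h_shift]
    ring

lemma qint_add (a b : ℕ) : qint (a + b) = qint a + X ^ a * qint b := by
  simp only [qint, Finset.sum_range_add, pow_add, Finset.mul_sum]

lemma aeval_qint_eq_zero_of_dvd (hζ : IsPrimitiveRoot ζ d) (hd : 1 < d) {a : ℕ} (h : d ∣ a) :
    aeval ζ (qint a) = 0 := by
  obtain ⟨c, rfl⟩ := h
  induction c with
  | zero => simp [qint]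
  | succ c ih =>
    have h_order : aeval ζ (qint d) = 0 := by simpa [qint] using hζ.geom_sum_eq_zero hd
    rw [mul_add_one, qint_add, map_add, ih, map_mul, h_order, mul_zero, add_zero]

lemma aeval_qint_eq_of_modEq (hζ : IsPrimitiveRoot ζ d) (hd : 1 < d) {a b : ℕ}
    (h : a ≡ b [MOD d]) : aeval ζ (qint a) = aeval ζ (qint b) := by
  have h_mod (c : ℕ) : aeval ζ (qint c) = aeval ζ (qint (c % d)) := by
    rw [← Nat.div_add_mod c d, qint_add, map_add, map_mul,
      aeval_qint_eq_zero_of_dvd hζ hd (Nat.dvd_mul_right _ _), map_pow, aeval_X, pow_mul,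
      hζ.pow_eq_one, one_pow, one_mul, zero_add, Nat.mul_add_mod, Nat.mod_mod]
  rw [h_mod a, h_mod b, h]

lemma aeval_qint_reflect (hζ : IsPrimitiveRoot ζ d) (hd : 1 < d) {a b : ℕ} (h : d ∣ a + b) :
    aeval ζ (qint a) + ζ ^ a * aeval ζ (qint b) = 0 := by
  simpa [qint_add] using aeval_qint_eq_zero_of_dvd hζ hd h

end RootOfUnity

section Evaluation

variable {R : Type*} [CommRing R]

lemma map_toLaurent_eq_aeval (φ : ℤ[T;T⁻¹] →+* R) (p : ℤ[X]) :
    φ p.toLaurent = aeval (φ (T 1)) p := by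
  have h : (φ.comp toLaurent) = (aeval (φ (T 1)) : ℤ[X] →ₐ[ℤ] R).toRingHom := by
    ext <;> simp
  exact congrArg (· p) h

lemma map_qintL (φ : ℤ[T;T⁻¹] →+* R) (a : ℕ) : φ (qintL a) = aeval (φ (T 1)) (qint a) :=
  map_toLaurent_eq_aeval φ (qint a)

variable {φ : ℤ[T;T⁻¹] →+* R} {d : ℕ}

lemma map_T_natCast (φ : ℤ[T;T⁻¹] →+* R) (a : ℕ) : φ (T a) = φ (T 1) ^ a := by
  rw [← map_pow, T_pow, mul_one]

lemma map_T_eq_of_modEq (hφ : φ (T 1) ^ d = 1) {a b : ℤ} (h : a ≡ b [ZMOD d]) :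
    φ (T a) = φ (T b) := by
  have h_mul (a : ℤ) (c : ℕ) : φ (T (a + d * c)) = φ (T a) := by
    rw [T_add, map_mul, ← Nat.cast_mul, map_T_natCast, pow_mul, hφ, one_pow, mul_one]
  obtain ⟨c, hc⟩ := h.dvd
  obtain ⟨c, rfl | rfl⟩ := c.eq_nat_or_neg
  · rw [← h_mul a c, ← hc, add_sub_cancel]
  · rw [← h_mul b c, show b + d * c = a by lia]

lemma prod_range_T (k N : ℕ) (a : ℤ) :
    ∏ i ∈ Finset.range N, (T (a * (2 * (k + i : ℕ) + 1)) : ℤ[T;T⁻¹]) = T (a * N * (2 * k + N)) := by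
  induction N with
  | zero => simp
  | succ N ih =>
    rw [Finset.prod_range_succ, ih, ← T_add]
    congr 1
    push_cast
    ring

lemma coeff_qw {α k : ℕ} (hα : α ≠ 0) (hk : k ≠ 0) (j : ℕ) :
    (qw α k).coeff j =
      T (α * (((j + 2).choose 2 : ℤ) - (k + 1) * j)) * (qwCoeff k (j + 1)).toLaurent ^ α := by
  rw [qw, finsetSum_coeff]
  simp only [coeff_C_mul_X_pow]
  rw [Finset.sum_eq_single (j + 1)]
  · simp
  · intro i hi hij
    rw [if_neg]
    have := (Finset.mem_Icc.1 hi).1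
    lia
  · intro hj
    rw [Finset.mem_Icc] at hj
    rw [qwCoeff_eq_zero_of_lt hk (by lia)]
    simp [hα]

variable [IsDomain R]

lemma map_qw_reflect (hφ : IsPrimitiveRoot (φ (T 1)) d) {α : ℕ} (hα : α ≠ 0) (a : ℕ) {k k' : ℕ}
    (h : k + k' + 3 = d) :
    (qw α (a * d + k + 1)).map φ =
      Polynomial.C (φ (T (α * (2 * (k + 1 : ℕ) + 1)))) * (qw α (a * d + k' + 1)).map φ := by
  ext j
  rw [coeff_C_mul, coeff_map, coeff_map, coeff_qw hα (Nat.succ_ne_zero _),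
    coeff_qw hα (Nat.succ_ne_zero _), map_mul, map_mul, map_pow, map_pow, map_toLaurent_eq_aeval,
    map_toLaurent_eq_aeval, aeval_qwCoeff_reflect hφ a (j + 1) h, mul_pow, ← pow_mul,
    ← map_T_natCast, ← mul_assoc, ← mul_assoc, ← map_mul, ← map_mul, ← T_add, ← T_add]
  congr 1
  refine map_T_eq_of_modEq hφ.pow_eq_one (Int.modEq_iff_dvd.2 ⟨-(α * j), ?_⟩)
  subst h
  push_cast
  ring

lemma map_prod_qw_reflect (hφ : IsPrimitiveRoot (φ (T 1)) d) {α : ℕ} (hα : α ≠ 0) (a N : ℕ)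
    {k k' : ℕ} (h : k + k' + N + 2 = d) :
    (∏ i ∈ Finset.range N, qw α (a * d + (k + 1) + i)).map φ =
      Polynomial.C (φ (T (α * N * (2 * (k + 1 : ℕ) + N)))) *
        (∏ i ∈ Finset.range N, qw α (a * d + (k' + 1) + i)).map φ := by
  rw [← prod_range_T, map_prod, map_prod, Polynomial.map_prod, Polynomial.map_prod,
    ← Finset.prod_range_reflect fun i => (qw α (a * d + (k' + 1) + i)).map φ,
    ← Finset.prod_mul_distrib]
  refine Finset.prod_congr rfl fun i hi => ?_
  have hi := Finset.mem_range.1 hi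
  rw [show a * d + (k + 1) + i = a * d + (k + i) + 1 by ring,
    show a * d + (k' + 1) + (N - 1 - i) = a * d + (k' + (N - 1 - i)) + 1 by ring,
    show k + 1 + i = k + i + 1 by ring,
    map_qw_reflect hφ hα a (k' := k' + (N - 1 - i)) (by lia)]

end Evaluation

section RisingFactorial

lemma dvd_ascFactorial {d k i β : ℕ} (hi : i < β) (h : d ∣ k + i) : d ∣ k.ascFactorial β := by
  rw [Nat.ascFactorial_eq_prod_range]
  exact h.trans (Finset.dvd_prod_of_mem _ (Finset.mem_range.2 hi))

lemma cast_ascFactorial_reflect {R : Type*} [CommRing R] {k k' β : ℕ}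
    (h : (k + k' + β : R) = 1) : (k'.ascFactorial β : R) = (-1) ^ β * (k.ascFactorial β : R) := by
  rw [Nat.cast_ascFactorial, Nat.cast_ascFactorial,
    show (k' : R) = -(k + β - 1) by linear_combination h,
    ascPochhammer_eval_neg_eq_descPochhammer, descPochhammer_eval_eq_ascPochhammer,
    show (k + β - 1 - β + 1 : R) = k by ring]

/-- The argument `(k)_β * (k + β + 1)_β` of the first `q`-integer in the `k`-th summand. -/
def risingPair (β k : ℕ) : ℕ :=
  k.ascFactorial β * (k + β + 1).ascFactorial β

lemma dvd_risingPair {d k t β : ℕ} (ht : t ≤ 2 * β) (ht' : t ≠ β) (h : d ∣ k + t) :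
    d ∣ risingPair β k := by
  rcases ht'.lt_or_gt with hlt | hgt
  · exact (dvd_ascFactorial hlt h).mul_right _
  · obtain ⟨s, rfl⟩ := Nat.exists_eq_add_of_lt hgt
    rw [show k + (β + s + 1) = k + β + 1 + s by ring] at h
    exact (dvd_ascFactorial (by lia) h).mul_left _

lemma risingPair_reflect_modEq {d k k' β : ℕ} (h : d ∣ k + k' + 2 * β) :
    risingPair β k ≡ risingPair β k' [MOD d] := by
  have h_zero : (k + k' + 2 * β : ZMod d) = 0 := by
    exact_mod_cast (ZMod.natCast_eq_zero_iff _ _).2 h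
  rw [← ZMod.natCast_eq_natCast_iff, risingPair, risingPair, Nat.cast_mul, Nat.cast_mul,
    cast_ascFactorial_reflect (k := k') (k' := k + β + 1),
    cast_ascFactorial_reflect (k := k) (k' := k' + β + 1)]
  · ring
  all_goals
    push_cast
    linear_combination h_zero

end RisingFactorial

section Summand

/-- The `k`-th summand of the congruence, a polynomial in `x` over `ℤ[q, q⁻¹]`. -/
noncomputable def qSummand (α β m n r k : ℕ) : ℤ[T;T⁻¹][X] :=
  Polynomial.C (qintL (risingPair β k) ^ r * qintL (2 * (k + β)) *
      T (((n : ℤ) - 2 * β - k) * (2 * β * α * m + 1))) *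
    ∏ i ∈ Finset.range (2 * β), qw α (k + i) ^ m

variable {R : Type*} [CommRing R] [IsDomain R] {φ : ℤ[T;T⁻¹] →+* R} {d α β m n r : ℕ}

lemma map_qSummand_eq_zero_of_dvd (hφ : IsPrimitiveRoot (φ (T 1)) d) (hd : 1 < d) (hr : r ≠ 0)
    {k t : ℕ} (ht : t ≤ 2 * β) (h : d ∣ k + t) : (qSummand α β m n r k).map φ = 0 := by
  suffices φ (qintL (risingPair β k)) ^ r * φ (qintL (2 * (k + β))) = 0 by
    rw [qSummand, Polynomial.map_mul, map_C, map_mul φ, map_mul φ, map_pow φ, this, zero_mul, C_0,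
      zero_mul]
  rw [map_qintL, map_qintL]
  rcases eq_or_ne t β with rfl | ht'
  · rw [aeval_qint_eq_zero_of_dvd hφ hd (h.mul_left 2), mul_zero]
  · rw [aeval_qint_eq_zero_of_dvd hφ hd (dvd_risingPair ht ht' h), zero_pow hr, zero_mul]

lemma map_qSummand_reflect (hφ : IsPrimitiveRoot (φ (T 1)) d) (hd : 1 < d) (hα : α ≠ 0) (a : ℕ)
    {k k' : ℕ} (h : k + k' + 2 * β + 2 = d) :
    (qSummand α β m n r (a * d + (k + 1))).map φ +
      (qSummand α β m n r (a * d + (k' + 1))).map φ = 0 := by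
  have h_risingPair : φ (qintL (risingPair β (a * d + (k + 1)))) =
      φ (qintL (risingPair β (a * d + (k' + 1)))) := by
    rw [map_qintL, map_qintL]
    exact aeval_qint_eq_of_modEq hφ hd
      (risingPair_reflect_modEq ⟨2 * a + 1, by subst h; ring⟩)
  have h_factor : φ (qintL (2 * (a * d + (k + 1) + β))) +
      φ (T ((2 * (a * d + (k + 1) + β) : ℕ))) * φ (qintL (2 * (a * d + (k' + 1) + β))) = 0 := by
    rw [map_qintL, map_qintL, map_T_natCast]
    exact aeval_qint_reflect hφ hd ⟨4 * a + 2, by subst h; ring⟩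
  have h_exp : φ (T (((n : ℤ) - 2 * β - (a * d + (k' + 1) : ℕ)) * (2 * β * α * m + 1))) =
      φ (T (((n : ℤ) - 2 * β - (a * d + (k + 1) : ℕ)) * (2 * β * α * m + 1))) *
        φ (T (α * (2 * β : ℕ) * (2 * (k + 1 : ℕ) + (2 * β : ℕ)))) ^ m *
        φ (T (2 * (a * d + (k + 1) + β) : ℕ)) := by
    rw [← map_pow, T_pow, ← map_mul, ← T_add, ← map_mul, ← T_add]
    refine map_T_eq_of_modEq hφ.pow_eq_one
      (Int.modEq_iff_dvd.2 ⟨2 * β * α * m + 1 + 2 * a, ?_⟩)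
    subst h
    push_cast
    ring
  simp only [qSummand, Finset.prod_pow, Polynomial.map_mul, Polynomial.map_pow, map_C, map_mul φ,
    map_pow φ]
  rw [map_prod_qw_reflect hφ hα a (2 * β) h, h_risingPair, mul_pow, ← C_pow, ← mul_assoc, ← C_mul,
    ← add_mul, ← C_add, h_exp]
  refine mul_eq_zero_of_left (C_eq_zero.2 ?_) _
  linear_combination φ (qintL (risingPair β (a * d + (k' + 1)))) ^ r *
    φ (T (((n : ℤ) - 2 * β - (a * d + (k + 1) : ℕ)) * (2 * β * α * m + 1))) *
    φ (T (α * (2 * β : ℕ) * (2 * (k + 1 : ℕ) + (2 * β : ℕ)))) ^ m * h_factor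

end Summand

lemma sum_range_eq_zero_of_reflect {M : Type*} [AddCommGroup M] [IsAddTorsionFree M] {f : ℕ → M}
    {c d : ℕ} (hzero : ∀ i ≤ d, d ≤ i + c → f i = 0)
    (hreflect : ∀ i j, i + j + c = d → f i + f j = 0) : ∑ i ∈ Finset.range d, f i = 0 := by
  rcases lt_or_ge d c with hcd | hcd
  · exact Finset.sum_eq_zero fun i hi => hzero i (Finset.mem_range.1 hi).le (by lia)
  have h_trunc : ∑ i ∈ Finset.range d, f i = ∑ i ∈ Finset.range (d - c + 1), f i := by
    rw [← add_zero (∑ i ∈ Finset.range d, f i), ← hzero d le_rfl (by lia), ← Finset.sum_range_succ]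
    refine (Finset.sum_subset (Finset.range_mono (by lia)) fun i hi hi' => ?_).symm
    rw [Finset.mem_range] at hi hi'
    exact hzero i (by lia) (by lia)
  have h_double :
      ∑ i ∈ Finset.range (d - c + 1), f i + ∑ i ∈ Finset.range (d - c + 1), f i = 0 := by
    nth_rw 2 [← Finset.sum_range_reflect]
    rw [← Finset.sum_add_distrib]
    refine Finset.sum_eq_zero fun i hi => hreflect _ _ ?_
    have := Finset.mem_range.1 hi
    lia
  rwa [h_trunc, ← self_eq_neg, eq_neg_iff_add_eq_zero]

lemma sum_range_mul_eq_zero {M : Type*} [AddCommMonoid M] {f : ℕ → M} {d : ℕ} (N : ℕ)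
    (h : ∀ a, ∑ i ∈ Finset.range d, f (a * d + i) = 0) :
    ∑ k ∈ Finset.range (N * d), f k = 0 := by
  induction N with
  | zero => simp
  | succ N ih => rw [add_one_mul, Finset.sum_range_add, ih, h, add_zero]

lemma map_sum_qSummand_eq_zero {R : Type*} [CommRing R] [IsDomain R] [CharZero R]
    {φ : ℤ[T;T⁻¹] →+* R} {d α β m n r : ℕ} (hφ : IsPrimitiveRoot (φ (T 1)) d) (hd : 1 < d)
    (hα : α ≠ 0) (hr : r ≠ 0) (hn : d ∣ n) :
    (∑ k ∈ Finset.range n, qSummand α β m n r k).map φ = 0 := by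
  have h_vanish (a i t : ℕ) (ht : t ≤ 2 * β) (h : d ∣ i + t) :
      (qSummand α β m n r (a * d + i)).map φ = 0 :=
    map_qSummand_eq_zero_of_dvd hφ hd hr ht (by rw [add_assoc]; exact (Nat.dvd_mul_left d a).add h)
  rw [Polynomial.map_sum]
  obtain ⟨N, rfl⟩ := exists_eq_mul_left_of_dvd hn
  refine sum_range_mul_eq_zero N fun a => sum_range_eq_zero_of_reflect (c := 2 * β) ?_ ?_
  · intro i hid h
    exact h_vanish a i (d - i) (by lia) (by rw [Nat.add_sub_cancel' hid])
  · intro i j h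
    rcases i with _ | i
    · rw [h_vanish a 0 0 (Nat.zero_le _) (dvd_zero d),
        h_vanish a j (2 * β) le_rfl (Dvd.intro 1 (by lia)), add_zero]
    rcases j with _ | j
    · rw [h_vanish a 0 0 (Nat.zero_le _) (dvd_zero d),
        h_vanish a (i + 1) (2 * β) le_rfl (Dvd.intro 1 (by lia)), add_zero]
    exact map_qSummand_reflect hφ hd hα a (by lia)

lemma isRelPrime_cyclotomic {d e : ℕ} (hd : 0 < d) (he : 0 < e) (h : d ≠ e) :
    IsRelPrime (cyclotomic d ℤ) (cyclotomic e ℤ) := by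
  refine (cyclotomic.irreducible hd).isRelPrime_iff_not_dvd.2 fun hdvd => h ?_
  exact cyclotomic_injective (R := ℤ) (eq_of_monic_of_associated (cyclotomic.monic d ℤ)
    (cyclotomic.monic e ℤ)
    ((cyclotomic.irreducible hd).associated_of_dvd (cyclotomic.irreducible he) hdvd))

lemma qint_dvd_of_aeval_eq_zero {n : ℕ} (hn : 0 < n) {p : ℤ[X]}
    (h : ∀ d, d ∣ n → 1 < d → ∀ ζ : ℂ, IsPrimitiveRoot ζ d → aeval ζ p = 0) : qint n ∣ p := by
  rw [qint, ← prod_cyclotomic_eq_geom_sum hn]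
  refine Finset.prod_dvd_of_isRelPrime (fun d hd e he hde => ?_) fun d hd => ?_
  · exact isRelPrime_cyclotomic (Nat.pos_of_mem_divisors (Finset.mem_of_mem_erase hd))
      (Nat.pos_of_mem_divisors (Finset.mem_of_mem_erase he)) hde
  · have hd_pos := Nat.pos_of_mem_divisors (Finset.mem_of_mem_erase hd)
    have hζ := Complex.isPrimitiveRoot_exp d hd_pos.ne'
    rw [cyclotomic_eq_minpoly hζ hd_pos]
    refine minpoly.isIntegrallyClosed_dvd (hζ.isIntegral hd_pos) (h d ?_ ?_ _ hζ)
    · exact Nat.dvd_of_mem_divisors (Finset.mem_of_mem_erase hd)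
    · exact lt_of_le_of_ne hd_pos (Finset.ne_of_mem_erase hd).symm

lemma qintL_dvd_of_map_eq_zero {n : ℕ} (hn : 0 < n) {p : ℤ[T;T⁻¹]}
    (h : ∀ d, d ∣ n → 1 < d → ∀ φ : ℤ[T;T⁻¹] →+* ℂ, IsPrimitiveRoot (φ (T 1)) d → φ p = 0) :
    qintL n ∣ p := by
  obtain ⟨N, f, hf⟩ := p.exists_T_pow
  rw [← (isUnit_T (R := ℤ) N).dvd_mul_right, ← hf]
  refine map_dvd toLaurent (qint_dvd_of_aeval_eq_zero hn fun d hdn hd ζ hζ => ?_)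
  let φ : ℤ[T;T⁻¹] →+* ℂ := LaurentPolynomial.eval₂ (Int.castRingHom ℂ) (hζ.isUnit (by lia)).unit
  have hφ : φ (T 1) = ζ := by simp [φ]
  rw [← hφ, ← map_toLaurent_eq_aeval, hf, map_mul, h d hdn hd φ (hφ ▸ hζ), zero_mul]

/-- For all positive integers `α, β, m, n, r`,
`∑_{k=0}^{n-1} [(k)_β (k+β+1)_β]^r [2(k+β)] q^{(n-2β-k)(2βαm+1)}
∏_{i=0}^{2β-1} w_{k+i}^{(α)}(x;q)^m ≡ 0 (mod [n])`,
where `(k)_β = k(k+1)⋯(k+β−1)` is the rising factorial. -/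
theorem qint_dvd_sum_prod_general (α β m n r : ℕ)
    (hα : 1 ≤ α) (hβ : 1 ≤ β) (hm : 1 ≤ m) (hn : 1 ≤ n) (hr : 1 ≤ r) :
    (Polynomial.C (qintL n) : Polynomial (LaurentPolynomial ℤ)) ∣
      ∑ k ∈ Finset.range n,
        Polynomial.C ((qintL (k.ascFactorial β * (k + β + 1).ascFactorial β)) ^ r *
            qintL (2 * (k + β)) *
            LaurentPolynomial.T (((n : ℤ) - 2 * β - k) * (2 * β * α * m + 1))) *
          ∏ i ∈ Finset.range (2 * β), (qw α (k + i)) ^ m := by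
  change _ ∣ ∑ k ∈ Finset.range n, qSummand α β m n r k
  refine (C_dvd_iff_dvd_coeff _ _).2 fun j => qintL_dvd_of_map_eq_zero hn fun d hdn hd φ hφ => ?_
  rw [← coeff_map, map_sum_qSummand_eq_zero hφ hd (by lia) (by lia) hdn, coeff_zero]
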